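/- Let X = ℓ∞³, Y = ℓ₁³, and let T : X → Y be a bounded linear operator with ‖T‖ = 1 such that M_T ∩ Ext(B_X) = {±x₁, ±x₂, ±x₃, ±x₄}. Suppose |S₁| = 6, |S₂| = 2 and |S₃| = 0. If it is NOT the case that both ±J(Tx_i) = ±J(Tx_j) for all x_i, x_j ∈ S₁ and ±J(Tx_i) ⊆ ±Ext J(Tx_k) for all x_i ∈ S₁, x_k ∈ S₂, then T is 5-smooth, i.e., dim span J(T) = 5. -/

import Mathlib

open Metric Set Module Pointwise

noncomputable section

/-- `J x` is the set of supporting functionals of `x`. -/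
def suppFunctionals {E : Type*} [NormedAddCommGroup E] [NormedSpace ℝ E] (x : E) :
    Set (E →L[ℝ] ℝ) := {f | ‖f‖ = 1 ∧ f x = 1}

/-- ℓ∞³ : ℝ³ with the max norm. -/
abbrev Linf3 := Fin 3 → ℝ

/-- ℓ₁³ : ℝ³ with the ℓ¹ norm. -/
abbrev L13 := PiLp 1 (fun _ : Fin 3 => ℝ)

def x₁ : Linf3 := ![1, 1, 1]
def x₂ : Linf3 := ![-1, 1, 1]
def x₃ : Linf3 := ![-1, -1, 1]
def x₄ : Linf3 := ![1, -1, 1]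

/-- `M_T ∩ Ext(B_X)`: the norm-attainment set of `T` intersected with the
extreme points of the closed unit ball. -/
def MTExt (T : Linf3 →L[ℝ] L13) : Set Linf3 :=
  {x ∈ sphere (0 : Linf3) 1 | ‖T x‖ = ‖T‖} ∩ extremePoints ℝ (closedBall (0 : Linf3) 1)

/-- `Sk T k` is the set `S_k` of points `x` of `M_T ∩ Ext(B_X)` such that `T x` is
`k`-smooth. -/
def Sk (T : Linf3 →L[ℝ] L13) (k : ℕ) : Set Linf3 :=
  {x ∈ MTExt T | finrank ℝ (Submodule.span ℝ (suppFunctionals (T x))) = k}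

/-- `±A`, i.e. `A ∪ (-A)`. -/
def pm {E : Type*} [NormedAddCommGroup E] [NormedSpace ℝ E] (A : Set (E →L[ℝ] ℝ)) :
    Set (E →L[ℝ] ℝ) := A ∪ (-A)

/-!
A norm-one operator `T : ℓ∞³ → Y` is determined by its values at the vertices `x₁, x₂, x₃, x₄` of
the cube, and evaluation there embeds the operator space isometrically into `Y⁴` with the maximum
norm. By Hahn–Banach, `span J(T)` is therefore the sum of the spaces `xᵢ ⊗ span J(T xᵢ)`. The only
linear relation among the vertices is `x₁ - x₂ + x₃ - x₄ = 0`, so this sum is direct unless the four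
spans share a nonzero functional `v`. In the direct case the dimension is `1 + 1 + 1 + 2`. When a
common `v` exists and `T xᵢ` is smooth, `v` is a multiple of the single element of `J(T xᵢ)`, which
is an extreme point of the dual ball; in `ℓ₁` an extreme point of the dual ball lying in
`span J(y)` belongs to `±J(y)`, and this yields the excluded configuration.
-/

section Faces

variable {E F : Type*} [NormedAddCommGroup E] [NormedSpace ℝ E]
  [NormedAddCommGroup F] [NormedSpace ℝ F]

/-- The span of the face `J x` of the dual ball; `x` is `k`-smooth when it has dimension `k`. -/
abbrev suppSpan (x : E) : Submodule ℝ (E →L[ℝ] ℝ) := Submodule.span ℝ (suppFunctionals x)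

/-- The transpose `g ↦ g ∘ L` of `L`, as a linear map between continuous duals. -/
def dualTranspose (L : E →L[ℝ] F) : (F →L[ℝ] ℝ) →ₗ[ℝ] (E →L[ℝ] ℝ) :=
  (L.precomp ℝ).toLinearMap


lemma mem_suppFunctionals_of_norm_le_one {x : E} (hx : ‖x‖ ≤ 1) {f : E →L[ℝ] ℝ}
    (hf : ‖f‖ ≤ 1) (hfx : f x = 1) : f ∈ suppFunctionals x := by
  refine ⟨hf.antisymm ?_, hfx⟩
  calc (1 : ℝ) = ‖f x‖ := by rw [hfx, norm_one]
    _ ≤ ‖f‖ * ‖x‖ := f.le_opNorm x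
    _ ≤ ‖f‖ := mul_le_of_le_one_right (norm_nonneg f) hx

lemma suppFunctionals_neg (x : E) : suppFunctionals (-x) = -suppFunctionals x := by
  ext f
  simp [suppFunctionals]

lemma suppSpan_neg (x : E) : suppSpan (-x) = suppSpan x := by
  rw [suppSpan, suppFunctionals_neg, Submodule.span_neg]

lemma apply_le_apply_of_mem_suppFunctionals {x y : E} {f : E →L[ℝ] ℝ}
    (hf : f ∈ suppFunctionals x) (hy : ‖y‖ ≤ 1) : f y ≤ f x := by
  calc f y ≤ ‖f y‖ := le_abs_self _
    _ ≤ ‖f‖ * ‖y‖ := f.le_opNorm y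
    _ ≤ f x := by rwa [hf.1, hf.2, one_mul]

lemma mem_suppSpan_of_forall_apply_le {x : E} (hx : ‖x‖ ≤ 1) {g : E →L[ℝ] ℝ}
    (hg : ∀ y, ‖y‖ ≤ 1 → g y ≤ g x) : g ∈ suppSpan x := by
  obtain rfl | g_ne_zero := eq_or_ne g 0
  · exact Submodule.zero_mem _
  have apply_nonneg : 0 ≤ g x := by simpa using hg 0 (norm_zero.trans_le zero_le_one)
  have norm_le : ‖g‖ ≤ g x := g.opNorm_le_of_unit_norm apply_nonneg fun y hy ↦
    abs_le'.2 ⟨hg y hy.le, map_neg g y ▸ hg (-y) ((norm_neg y).trans_le hy.le)⟩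
  have apply_eq : g x = ‖g‖ := norm_le.antisymm' <|
    (le_abs_self _).trans ((g.le_opNorm x).trans (mul_le_of_le_one_right (norm_nonneg g) hx))
  have normalized_mem : ‖g‖⁻¹ • g ∈ suppFunctionals x := by
    refine ⟨norm_smul_inv_norm g_ne_zero, ?_⟩
    rw [smul_apply, apply_eq, smul_eq_mul, inv_mul_cancel₀ (norm_ne_zero_iff.2 g_ne_zero)]
  rw [← smul_inv_smul₀ (norm_ne_zero_iff.2 g_ne_zero) g]
  exact Submodule.smul_mem _ _ (Submodule.subset_span normalized_mem)

lemma isExtreme_suppFunctionals {x : E} (hx : ‖x‖ ≤ 1) :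
    IsExtreme ℝ (closedBall (0 : E →L[ℝ] ℝ) 1) (suppFunctionals x) := by
  refine IsExposed.isExtreme fun ⟨g, hg⟩ ↦ ⟨ContinuousLinearMap.apply ℝ ℝ x, ?_⟩
  have apply_le_one : ∀ f ∈ closedBall (0 : E →L[ℝ] ℝ) 1, f x ≤ 1 := fun f hf ↦
    (le_abs_self _).trans <| (f.le_opNorm x).trans <|
      mul_le_one₀ (mem_closedBall_zero_iff.1 hf) (norm_nonneg x) hx
  ext f
  constructor
  · rintro ⟨hf, hfx⟩
    refine ⟨mem_closedBall_zero_iff.2 hf.le, fun h hh ↦ ?_⟩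
    simpa [hfx] using apply_le_one h hh
  · rintro ⟨hf, hmax⟩
    have one_le : 1 ≤ f x := by
      simpa [hg.2] using hmax g (mem_closedBall_zero_iff.2 hg.1.le)
    exact mem_suppFunctionals_of_norm_le_one hx (mem_closedBall_zero_iff.1 hf)
      ((apply_le_one f hf).antisymm one_le)

lemma exists_suppFunctionals_eq_singleton {x : E} (hx : finrank ℝ (suppSpan x) = 1) :
    ∃ f, suppFunctionals x = {f} := by
  have nonempty : (suppFunctionals x).Nonempty := by
    rw [nonempty_iff_ne_empty]
    intro h
    rw [suppSpan, h, Submodule.span_empty, finrank_bot] at hx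
    exact zero_ne_one hx
  obtain ⟨f, hf⟩ := nonempty
  refine ⟨f, eq_singleton_iff_unique_mem.2 ⟨hf, fun g hg ↦ ?_⟩⟩
  obtain ⟨c, hcg⟩ : ∃ c : ℝ, c • f = g := by
    let f' : suppSpan x := ⟨f, Submodule.subset_span hf⟩
    have f'_ne_zero : f' ≠ 0 := fun h ↦ by
      have f_eq_zero : f = 0 := congrArg Subtype.val h
      simpa [f_eq_zero] using hf.2
    obtain ⟨c, hc⟩ := (finrank_eq_one_iff_of_nonzero' f' f'_ne_zero).1 hx
      ⟨g, Submodule.subset_span hg⟩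
    exact ⟨c, congrArg Subtype.val hc⟩
  have c_eq_one : c = 1 := by simpa [← hcg, hf.2] using hg.2
  rw [← hcg, c_eq_one, one_smul]

lemma comp_mem_suppFunctionals {L : E →L[ℝ] F} (hL : ‖L‖ ≤ 1) {x : E} (hx : ‖x‖ ≤ 1)
    {g : F →L[ℝ] ℝ} (hg : g ∈ suppFunctionals (L x)) : g.comp L ∈ suppFunctionals x := by
  refine mem_suppFunctionals_of_norm_le_one hx ?_ hg.2
  exact (g.opNorm_comp_le L).trans (mul_le_one₀ hg.1.le (norm_nonneg L) hL)

lemma exists_extension_along_linearIsometry (R : E →ₗᵢ[ℝ] F) (f : E →L[ℝ] ℝ) :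
    ∃ g : F →L[ℝ] ℝ, g.comp R.toContinuousLinearMap = f ∧ ‖g‖ = ‖f‖ := by
  let e : E ≃ₗᵢ[ℝ] LinearMap.range R.toLinearMap := R.equivRange
  obtain ⟨g, hg, hnorm⟩ := exists_extension_norm_eq (LinearMap.range R.toLinearMap)
    (f.comp e.symm.toContinuousLinearEquiv.toContinuousLinearMap)
  refine ⟨g, ?_, ?_⟩
  · ext x
    simpa [e] using hg (e x)
  · rw [hnorm]
    exact f.opNorm_comp_linearIsometryEquiv e.symm

lemma suppSpan_eq_map_of_isometry (R : E →ₗᵢ[ℝ] F) {x : E} (hx : ‖x‖ ≤ 1) :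
    suppSpan x = (suppSpan (R x)).map (dualTranspose R.toContinuousLinearMap) := by
  rw [suppSpan, Submodule.map_span]
  congr 1
  ext f
  constructor
  · intro hf
    obtain ⟨g, rfl, hnorm⟩ := exists_extension_along_linearIsometry R f
    exact ⟨g, ⟨hnorm.trans hf.1, hf.2⟩, rfl⟩
  · rintro ⟨g, hg, rfl⟩
    exact comp_mem_suppFunctionals R.norm_toContinuousLinearMap_le hx hg

end Faces

section Products

variable {ι : Type*} [Fintype ι] {E : ι → Type*} [∀ i, NormedAddCommGroup (E i)]
  [∀ i, NormedSpace ℝ (E i)]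

lemma comp_single_mem_suppSpan [DecidableEq ι] {w : ∀ i, E i} (hw : ‖w‖ ≤ 1)
    {G : (∀ i, E i) →L[ℝ] ℝ} (hG : G ∈ suppFunctionals w) (i : ι) :
    G.comp (ContinuousLinearMap.single ℝ E i) ∈ suppSpan (w i) := by
  refine mem_suppSpan_of_forall_apply_le ((norm_le_pi_norm w i).trans hw) fun y hy ↦ ?_
  have norm_update : ‖Function.update w i y‖ ≤ 1 := by
    refine (pi_norm_le_iff_of_nonneg zero_le_one).2 fun j ↦ ?_
    obtain rfl | hj := eq_or_ne j i
    · rwa [Function.update_self]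
    · rw [Function.update_of_ne hj]
      exact (norm_le_pi_norm w j).trans hw
  have update_eq : Function.update w i y = w + (Pi.single i y - Pi.single i (w i)) := by
    ext j
    obtain rfl | hj := eq_or_ne j i <;> simp [*]
  have apply_update_le : G (Function.update w i y) ≤ G w :=
    apply_le_apply_of_mem_suppFunctionals hG norm_update
  rw [update_eq, map_add, map_sub, add_le_iff_nonpos_right, sub_nonpos] at apply_update_le
  exact apply_update_le

lemma suppSpan_pi_eq_iSup {w : ∀ i, E i} (hw : ‖w‖ ≤ 1) :
    suppSpan w = ⨆ i, (suppSpan (w i)).map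
      (dualTranspose (ContinuousLinearMap.proj i : (∀ i, E i) →L[ℝ] E i)) := by
  classical
  apply le_antisymm
  · refine Submodule.span_le.2 fun G hG ↦ ?_
    have G_eq : G = ∑ i, (G.comp (ContinuousLinearMap.single ℝ E i)).comp
        (ContinuousLinearMap.proj i) := by
      ext v
      simp [← map_sum, Finset.univ_sum_single]
    rw [G_eq]
    exact Submodule.sum_mem_iSup fun i ↦
      Submodule.mem_map_of_mem (comp_single_mem_suppSpan hw hG i)
  · refine iSup_le fun i ↦ (Submodule.map_span_le _ _ _).2 fun g hg ↦ Submodule.subset_span ?_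
    exact comp_mem_suppFunctionals
      (ContinuousLinearMap.opNorm_le_bound _ zero_le_one fun v ↦ by
        simpa using norm_le_pi_norm v i) hw hg

end Products

section FaceSpans

variable {E : Type*} [NormedAddCommGroup E] [NormedSpace ℝ E]

variable (E) in
/-- The only geometric property of `ℓ₁` that matters for the target space: an extreme point of the
dual ball lying in the linear span of a face `J y` lies in `J y` or in `-J y`. -/
def ExtremeFaceSpanProperty : Prop :=
  ∀ y : E, ‖y‖ = 1 → ∀ f ∈ extremePoints ℝ (closedBall (0 : E →L[ℝ] ℝ) 1),
    f ∈ suppSpan y → f ∈ pm (suppFunctionals y)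

lemma neg_mem_pm {A : Set (E →L[ℝ] ℝ)} {f : E →L[ℝ] ℝ} (hf : f ∈ pm A) : -f ∈ pm A := by
  rcases hf with hf | hf
  · exact Or.inr (by rwa [Set.mem_neg, neg_neg])
  · exact Or.inl hf

lemma pm_mono {A B : Set (E →L[ℝ] ℝ)} (h : A ⊆ B) : pm A ⊆ pm B :=
  union_subset_union h (Set.neg_subset_neg.2 h)

lemma neg_mem_extremePoints_closedBall {f : E →L[ℝ] ℝ}
    (hf : f ∈ extremePoints ℝ (closedBall (0 : E →L[ℝ] ℝ) 1)) :
    -f ∈ extremePoints ℝ (closedBall (0 : E →L[ℝ] ℝ) 1) := by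
  have image_neg : LinearEquiv.neg ℝ '' closedBall (0 : E →L[ℝ] ℝ) 1 = closedBall 0 1 := by
    ext
    simp
  rw [← image_neg, ← image_extremePoints]
  exact ⟨f, hf, rfl⟩

lemma mem_pm_extremePoints_suppFunctionals {y : E} (hy : ‖y‖ ≤ 1) {f : E →L[ℝ] ℝ}
    (hf : f ∈ extremePoints ℝ (closedBall (0 : E →L[ℝ] ℝ) 1)) (hfy : f ∈ pm (suppFunctionals y)) :
    f ∈ pm (extremePoints ℝ (suppFunctionals y)) := by
  have inter_subset := inter_extremePoints_subset_extremePoints_of_subset (𝕜 := ℝ)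
    (isExtreme_suppFunctionals hy).subset
  exact hfy.imp (fun h ↦ inter_subset ⟨h, hf⟩)
    fun h ↦ inter_subset ⟨h, neg_mem_extremePoints_closedBall hf⟩

lemma pm_suppFunctionals_subset_pm_extremePoints (hE : ExtremeFaceSpanProperty E) {y z : E}
    (hy : ‖y‖ = 1) (hz : ‖z‖ = 1) (hy_smooth : finrank ℝ (suppSpan y) = 1) {v : E →L[ℝ] ℝ}
    (hv : v ≠ 0) (hvy : v ∈ suppSpan y) (hvz : v ∈ suppSpan z) :
    pm (suppFunctionals y) ⊆ pm (extremePoints ℝ (suppFunctionals z)) := by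
  obtain ⟨f, hf⟩ := exists_suppFunctionals_eq_singleton hy_smooth
  have hf_extreme : f ∈ extremePoints ℝ (closedBall (0 : E →L[ℝ] ℝ) 1) :=
    (hf ▸ isExtreme_suppFunctionals hy.le).mem_extremePoints
  obtain ⟨c, rfl⟩ : ∃ c : ℝ, c • f = v := by
    rwa [suppSpan, hf, Submodule.mem_span_singleton] at hvy
  have hfz : f ∈ suppSpan z := (Submodule.smul_mem_iff _ (left_ne_zero_of_smul hv)).1 hvz
  have hf_pm : f ∈ pm (extremePoints ℝ (suppFunctionals z)) :=
    mem_pm_extremePoints_suppFunctionals hz.le hf_extreme (hE z hz f hf_extreme hfz)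
  rw [hf, pm, union_subset_iff, Set.neg_singleton, singleton_subset_iff, singleton_subset_iff]
  exact ⟨hf_pm, neg_mem_pm hf_pm⟩

end FaceSpans

section EllOne

variable {ι : Type*} [Fintype ι]

lemma norm_piLp_one_eq_sum (y : PiLp 1 fun _ : ι ↦ ℝ) : ‖y‖ = ∑ i, |y i| := by
  simp [PiLp.norm_eq_of_L1]

variable [DecidableEq ι]

lemma apply_eq_sum_mul_apply_single (f : (PiLp 1 fun _ : ι ↦ ℝ) →L[ℝ] ℝ)
    (y : PiLp 1 fun _ : ι ↦ ℝ) : f y = ∑ i, y i * f (PiLp.single 1 i 1) := by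
  conv_lhs => rw [← (PiLp.basisFun 1 ℝ ι).sum_repr y]
  simp

lemma abs_apply_single_le (f : (PiLp 1 fun _ : ι ↦ ℝ) →L[ℝ] ℝ) (i : ι) :
    |f (PiLp.single 1 i 1)| ≤ ‖f‖ := by
  simpa using f.le_opNorm (PiLp.single 1 i 1)

lemma norm_le_of_abs_apply_single_le {f : (PiLp 1 fun _ : ι ↦ ℝ) →L[ℝ] ℝ} {C : ℝ} (hC : 0 ≤ C)
    (hf : ∀ i, |f (PiLp.single 1 i 1)| ≤ C) : ‖f‖ ≤ C := by
  refine f.opNorm_le_bound hC fun y ↦ ?_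
  calc ‖f y‖ ≤ ∑ i, |y i * f (PiLp.single 1 i 1)| := by
        rw [apply_eq_sum_mul_apply_single]
        exact Finset.abs_sum_le_sum_abs _ _
    _ ≤ ∑ i, |y i| * C := by
        gcongr with i
        rw [abs_mul]
        gcongr
        exact hf i
    _ = C * ‖y‖ := by rw [← Finset.sum_mul, ← norm_piLp_one_eq_sum, mul_comm]

lemma abs_apply_single_of_mem_extremePoints {f : (PiLp 1 fun _ : ι ↦ ℝ) →L[ℝ] ℝ}
    (hf : f ∈ extremePoints ℝ (closedBall (0 : (PiLp 1 fun _ : ι ↦ ℝ) →L[ℝ] ℝ) 1)) (i : ι) :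
    |f (PiLp.single 1 i 1)| = 1 := by
  have coord_le (j : ι) : |f (PiLp.single 1 j 1)| ≤ 1 :=
    (abs_apply_single_le f j).trans (mem_closedBall_zero_iff.1 hf.1)
  refine (coord_le i).antisymm (le_of_not_gt fun hlt ↦ ?_)
  set δ := 1 - |f (PiLp.single 1 i 1)|
  have δ_pos : 0 < δ := sub_pos.2 hlt
  let p : (PiLp 1 fun _ : ι ↦ ℝ) →L[ℝ] ℝ := PiLp.proj 1 (fun _ : ι ↦ ℝ) i
  have perturbation_mem (t : ℝ) (ht : |t| = δ) :
      f + t • p ∈ closedBall (0 : (PiLp 1 fun _ : ι ↦ ℝ) →L[ℝ] ℝ) 1 := by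
    refine mem_closedBall_zero_iff.2 (norm_le_of_abs_apply_single_le zero_le_one fun j ↦ ?_)
    obtain rfl | hj := eq_or_ne i j
    · calc |(f + t • p) (PiLp.single 1 i 1)| = |f (PiLp.single 1 i 1) + t| := by simp [p]
        _ ≤ |f (PiLp.single 1 i 1)| + |t| := abs_add_le _ _
        _ = 1 := by rw [ht]; simp [δ]
    · simpa [p, hj] using coord_le j
  have f_mem_openSegment : f ∈ openSegment ℝ (f + δ • p) (f + (-δ) • p) :=
    ⟨1 / 2, 1 / 2, by norm_num, by norm_num, by norm_num, by module⟩
  have h_eq : f + δ • p = f := hf.2 (perturbation_mem δ (abs_of_pos δ_pos))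
    (perturbation_mem (-δ) (by rw [abs_neg, abs_of_pos δ_pos])) f_mem_openSegment
  have δ_eq_zero : δ = 0 := by
    simpa [p] using congrArg (fun g ↦ g (PiLp.single 1 i 1)) h_eq
  exact δ_pos.ne' δ_eq_zero

lemma mul_apply_single_of_mem_suppFunctionals {y : PiLp 1 fun _ : ι ↦ ℝ} (hy : ‖y‖ = 1)
    {f : (PiLp 1 fun _ : ι ↦ ℝ) →L[ℝ] ℝ} (hf : f ∈ suppFunctionals y) (i : ι) :
    y i * f (PiLp.single 1 i 1) = |y i| := by
  have term_le : ∀ j ∈ Finset.univ, y j * f (PiLp.single 1 j 1) ≤ |y j| := fun j _ ↦ by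
    refine (le_abs_self _).trans ?_
    rw [abs_mul]
    exact mul_le_of_le_one_right (abs_nonneg _) ((abs_apply_single_le f j).trans hf.1.le)
  have sum_eq : ∑ j, y j * f (PiLp.single 1 j 1) = ∑ j, |y j| := by
    rw [← apply_eq_sum_mul_apply_single, ← norm_piLp_one_eq_sum, hf.2, hy]
  exact (Finset.sum_eq_sum_iff_of_le term_le).1 sum_eq i (Finset.mem_univ i)

lemma mul_apply_single_of_mem_suppSpan {y : PiLp 1 fun _ : ι ↦ ℝ} (hy : ‖y‖ = 1)
    {f : (PiLp 1 fun _ : ι ↦ ℝ) →L[ℝ] ℝ} (hf : f ∈ suppSpan y) (i : ι) :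
    y i * f (PiLp.single 1 i 1) = f y * |y i| := by
  induction hf using Submodule.span_induction with
  | mem f hf => rw [mul_apply_single_of_mem_suppFunctionals hy hf, hf.2, one_mul]
  | zero => simp
  | add f g _ _ hf hg => rw [add_apply, add_apply, mul_add, hf, hg, add_mul]
  | smul c f _ hf =>
    rw [smul_apply, smul_apply, smul_eq_mul, smul_eq_mul, mul_left_comm, hf, mul_assoc]

end EllOne

lemma extremeFaceSpanProperty_piLp_one (ι : Type*) [Fintype ι] :
    ExtremeFaceSpanProperty (PiLp 1 fun _ : ι ↦ ℝ) := by
  classical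
  intro y hy f hf hfy
  have y_ne_zero : y ≠ 0 := norm_ne_zero_iff.1 (hy ▸ one_ne_zero)
  obtain ⟨i, hi⟩ : ∃ i, y i ≠ 0 := by
    by_contra! h
    exact y_ne_zero (by ext i; exact h i)
  have abs_apply : |f y| = 1 := by
    have abs_coord_eq := congrArg abs (mul_apply_single_of_mem_suppSpan hy hfy i)
    rw [abs_mul, abs_mul, abs_abs, abs_apply_single_of_mem_extremePoints hf, mul_comm]
      at abs_coord_eq
    exact (mul_right_cancel₀ (abs_ne_zero.2 hi) abs_coord_eq).symm
  have norm_le : ‖f‖ ≤ 1 := mem_closedBall_zero_iff.1 hf.1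
  rcases eq_or_eq_neg_of_abs_eq abs_apply with h | h
  · exact Or.inl (mem_suppFunctionals_of_norm_le_one hy.le norm_le h)
  · exact Or.inr (mem_suppFunctionals_of_norm_le_one hy.le ((norm_neg f).trans_le norm_le)
      (by rw [neg_apply, h, neg_neg]))

section Operators

variable {X Y : Type*} [NormedAddCommGroup X] [NormedSpace ℝ X]
  [NormedAddCommGroup Y] [NormedSpace ℝ Y] {ι : Type*} [Fintype ι]

variable (Y) in
/-- The finite family `x` is norming for operators into `Y`: the norm of an operator is the maximum
of its norms at the points `x i` (the norm on `ι → Y` being the maximum norm). -/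
def IsNormingFamily (x : ι → X) : Prop := ∀ A : X →L[ℝ] Y, ‖fun i ↦ A (x i)‖ = ‖A‖

lemma isNormingFamily_of_closedBall_eq_convexHull {x : ι → X}
    (hx : closedBall (0 : X) 1 = convexHull ℝ (range x ∪ -range x)) : IsNormingFamily Y x := by
  intro A
  set M := ‖fun i ↦ A (x i)‖
  have norm_le_one (i : ι) : ‖x i‖ ≤ 1 := by
    rw [← mem_closedBall_zero_iff, hx]
    exact subset_convexHull ℝ _ (Or.inl (mem_range_self i))
  have apply_le (i : ι) : ‖A (x i)‖ ≤ M := norm_le_pi_norm (fun i ↦ A (x i)) i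
  have sublevel_convex : Convex ℝ {v | ‖A v‖ ≤ M} := by
    simpa using (convexOn_univ_norm.comp_linearMap A.toLinearMap).convex_le M
  have closedBall_subset : closedBall (0 : X) 1 ⊆ {v | ‖A v‖ ≤ M} := by
    rw [hx]
    refine convexHull_min (union_subset ?_ ?_) sublevel_convex
    · exact range_subset_iff.2 apply_le
    · rintro v ⟨i, hi⟩
      rw [mem_ofPred_eq, ← neg_eq_iff_eq_neg.2 hi, map_neg, norm_neg]
      exact apply_le i
  apply le_antisymm
  · exact (pi_norm_le_iff_of_nonneg (norm_nonneg A)).2 fun i ↦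
      (A.le_opNorm (x i)).trans (mul_le_of_le_one_right (norm_nonneg A) (norm_le_one i))
  · exact A.opNorm_le_of_unit_norm (norm_nonneg _) fun v hv ↦
      closedBall_subset (mem_closedBall_zero_iff.2 hv.le)

/-- Evaluation along a norming family, as an isometric embedding of `X →L[ℝ] Y` into `ι → Y`. -/
def IsNormingFamily.evalIsometry {x : ι → X} (hx : IsNormingFamily Y x) :
    (X →L[ℝ] Y) →ₗᵢ[ℝ] (ι → Y) where
  toLinearMap := LinearMap.pi fun i ↦ (ContinuousLinearMap.apply ℝ Y (x i)).toLinearMap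
  norm_map' := hx

variable (Y) in
/-- The map `g ↦ x ⊗ g` from functionals on `Y` to functionals on operators, where
`(x ⊗ g) A = g (A x)`. -/
def evalTensor (x : X) : (Y →L[ℝ] ℝ) →ₗ[ℝ] ((X →L[ℝ] Y) →L[ℝ] ℝ) :=
  dualTranspose (ContinuousLinearMap.apply ℝ Y x)

@[simp]
lemma evalTensor_apply (x : X) (g : Y →L[ℝ] ℝ) (A : X →L[ℝ] Y) : evalTensor Y x g A = g (A x) := rfl

lemma suppSpan_eq_iSup_map_evalTensor {x : ι → X} (hx : IsNormingFamily Y x) {T : X →L[ℝ] Y}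
    (hT : ‖T‖ ≤ 1) : suppSpan T = ⨆ i, (suppSpan (T (x i))).map (evalTensor Y (x i)) := by
  have norm_eval : ‖hx.evalIsometry T‖ ≤ 1 := (hx.evalIsometry.norm_map T).trans_le hT
  rw [suppSpan_eq_map_of_isometry hx.evalIsometry hT, suppSpan_pi_eq_iSup norm_eval,
    Submodule.map_iSup]
  simp only [← Submodule.map_comp]
  rfl

/-- The sum `⨁ i, x i ⊗ V i → (X →L[ℝ] Y)*`. -/
def sumEvalTensor (x : ι → X) (V : ι → Submodule ℝ (Y →L[ℝ] ℝ)) :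
    (∀ i, V i) →ₗ[ℝ] ((X →L[ℝ] Y) →L[ℝ] ℝ) :=
  ∑ i, evalTensor Y (x i) ∘ₗ (V i).subtype ∘ₗ LinearMap.proj i

lemma sumEvalTensor_apply (x : ι → X) (V : ι → Submodule ℝ (Y →L[ℝ] ℝ)) (g : ∀ i, V i) :
    sumEvalTensor x V g = ∑ i, evalTensor Y (x i) (g i) := by
  simp [sumEvalTensor, LinearMap.sum_apply]

lemma range_sumEvalTensor (x : ι → X) (V : ι → Submodule ℝ (Y →L[ℝ] ℝ)) :
    LinearMap.range (sumEvalTensor x V) = ⨆ i, (V i).map (evalTensor Y (x i)) := by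
  classical
  apply le_antisymm
  · rintro _ ⟨g, rfl⟩
    rw [sumEvalTensor_apply]
    exact Submodule.sum_mem_iSup fun i ↦ Submodule.mem_map_of_mem (g i).2
  · refine iSup_le fun i ↦ ?_
    rintro _ ⟨g, hg, rfl⟩
    refine ⟨Pi.single i ⟨g, hg⟩, ?_⟩
    rw [sumEvalTensor_apply, Finset.sum_eq_single_of_mem i (Finset.mem_univ i)]
    · rw [Pi.single_eq_same]
    · intro j _ hj
      rw [Pi.single_eq_of_ne hj, Submodule.coe_zero, map_zero]

lemma sum_smul_eq_zero_of_sum_evalTensor_eq_zero {x : ι → X} {g : ι → Y →L[ℝ] ℝ}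
    (hg : ∑ i, evalTensor Y (x i) (g i) = 0) (y : Y) : ∑ i, g i y • x i = 0 := by
  refine SeparatingDual.eq_zero_of_forall_dual_eq_zero (R := ℝ) fun φ ↦ ?_
  have apply_rank_one : (∑ i, evalTensor Y (x i) (g i)) (φ.smulRight y) = 0 := by
    rw [hg, zero_apply]
  simpa [map_sum, mul_comm] using apply_rank_one

/-- If `∑ x i ⊗ g i = 0`, the functionals `(c i)⁻¹ • g i` all coincide, so their common value lies
in every `V i`. -/
lemma sumEvalTensor_injective {x : ι → X} {c : ι → ℝ} (hc : ∀ i, c i ≠ 0)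
    (hxc : LinearMap.ker (Fintype.linearCombination ℝ x) ≤ Submodule.span ℝ {c})
    {V : ι → Submodule ℝ (Y →L[ℝ] ℝ)} (hV : ⨅ i, V i = ⊥) :
    Function.Injective (sumEvalTensor x V) := by
  refine (injective_iff_map_eq_zero _).2 fun g hg ↦ ?_
  rw [sumEvalTensor_apply] at hg
  have normalized_eq (i j : ι) : (c i)⁻¹ • (g i : Y →L[ℝ] ℝ) = (c j)⁻¹ • (g j : Y →L[ℝ] ℝ) := by
    ext y
    obtain ⟨t, ht⟩ : ∃ t : ℝ, t • c = fun i ↦ (g i : Y →L[ℝ] ℝ) y :=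
      Submodule.mem_span_singleton.1 (hxc (sum_smul_eq_zero_of_sum_evalTensor_eq_zero hg y))
    have normalized_apply (k : ι) : ((c k)⁻¹ • (g k : Y →L[ℝ] ℝ)) y = t := by
      rw [smul_apply, ← congrFun ht k, Pi.smul_apply, smul_comm, smul_eq_mul, smul_eq_mul,
        inv_mul_cancel₀ (hc k), mul_one]
    rw [normalized_apply, normalized_apply]
  have normalized_eq_zero (i : ι) : (c i)⁻¹ • (g i : Y →L[ℝ] ℝ) = 0 := by
    rw [← Submodule.mem_bot ℝ, ← hV, Submodule.mem_iInf]
    intro j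
    rw [normalized_eq i j]
    exact (V j).smul_mem _ (g j).2
  ext1 i
  exact Subtype.ext ((smul_eq_zero_iff_right (inv_ne_zero (hc i))).1 (normalized_eq_zero i))

theorem finrank_suppSpan_eq_sum_of_iInf_eq_bot {x : ι → X} (hx : IsNormingFamily Y x) {c : ι → ℝ}
    (hc : ∀ i, c i ≠ 0)
    (hxc : LinearMap.ker (Fintype.linearCombination ℝ x) ≤ Submodule.span ℝ {c})
    {T : X →L[ℝ] Y} (hT : ‖T‖ ≤ 1) [∀ i, FiniteDimensional ℝ (suppSpan (T (x i)))]
    (hV : ⨅ i, suppSpan (T (x i)) = ⊥) :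
    finrank ℝ (suppSpan T) = ∑ i, finrank ℝ (suppSpan (T (x i))) := by
  have (i : ι) : Free ℝ (suppSpan (T (x i))) := Free.of_divisionRing ℝ (suppSpan (T (x i)))
  rw [suppSpan_eq_iSup_map_evalTensor hx hT,
    ← range_sumEvalTensor x fun i ↦ suppSpan (T (x i)),
    LinearMap.finrank_range_of_inj (sumEvalTensor_injective hc hxc hV), finrank_pi_fintype]

end Operators

section Cube

lemma closedBall_pi_eq_convexHull (ι : Type*) [Fintype ι] :
    closedBall (0 : ι → ℝ) 1 = convexHull ℝ (univ.pi fun _ ↦ ({-1, 1} : Set ℝ)) := by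
  simp [closedBall_pi, convexHull_pi, convexHull_pair, segment_eq_Icc, Real.closedBall_eq_Icc]

/-- One vertex of the cube from each antipodal pair. -/
def cubeVertex : Fin 4 → Linf3 := ![x₁, x₂, x₃, x₄]

lemma cubeVertex_apply_two (i : Fin 4) : cubeVertex i 2 = 1 := by
  fin_cases i <;> rfl

lemma cubeVertex_injective : Function.Injective cubeVertex := by
  intro i j h
  fin_cases i <;> fin_cases j <;>
    first | rfl | norm_num [cubeVertex, x₁, x₂, x₃, x₄] at h

lemma disjoint_range_cubeVertex_neg : Disjoint (range cubeVertex) (-range cubeVertex) := by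
  refine disjoint_left.2 ?_
  rintro _ ⟨i, rfl⟩ ⟨j, hij⟩
  have apply_two := congrFun hij 2
  rw [Pi.neg_apply, cubeVertex_apply_two, cubeVertex_apply_two] at apply_two
  norm_num at apply_two

lemma univ_pi_neg_one_one_eq_range_union_neg :
    (univ.pi fun _ : Fin 3 ↦ ({-1, 1} : Set ℝ)) = range cubeVertex ∪ -range cubeVertex := by
  apply Subset.antisymm
  · intro v hv
    have v_eq : v = ![v 0, v 1, v 2] := by ext j; fin_cases j <;> rfl
    have coord (j : Fin 3) : v j = -1 ∨ v j = 1 := hv j trivial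
    rw [v_eq]
    rcases coord 0 with h₀ | h₀ <;> rcases coord 1 with h₁ | h₁ <;>
      rcases coord 2 with h₂ | h₂ <;>
      simp [h₀, h₁, h₂, cubeVertex, x₁, x₂, x₃, x₄]
  · have vertex_coord (i : Fin 4) (j : Fin 3) : cubeVertex i j = -1 ∨ cubeVertex i j = 1 := by
      fin_cases i <;> fin_cases j <;> simp [cubeVertex, x₁, x₂, x₃, x₄]
    rintro v (⟨i, rfl⟩ | ⟨i, hi⟩) j -
    · exact vertex_coord i j
    · rw [← neg_eq_iff_eq_neg.2 hi]
      exact (vertex_coord i j).elim (fun h ↦ by simp [h]) (fun h ↦ by simp [h])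

lemma isNormingFamily_cubeVertex {Y : Type*} [NormedAddCommGroup Y] [NormedSpace ℝ Y] :
    IsNormingFamily Y cubeVertex :=
  isNormingFamily_of_closedBall_eq_convexHull <| by
    rw [closedBall_pi_eq_convexHull, univ_pi_neg_one_one_eq_range_union_neg]

/-- The coefficients of the relation `x₁ - x₂ + x₃ - x₄ = 0`. -/
def cubeRelation : Fin 4 → ℝ := ![1, -1, 1, -1]

lemma cubeRelation_ne_zero (i : Fin 4) : cubeRelation i ≠ 0 := by
  fin_cases i <;> norm_num [cubeRelation]

lemma ker_linearCombination_cubeVertex_le :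
    LinearMap.ker (Fintype.linearCombination ℝ cubeVertex) ≤
      Submodule.span ℝ {cubeRelation} := by
  intro a ha
  have sum_eq_zero : ∑ i, a i • cubeVertex i = 0 := ha
  have h₀ : a 0 - a 1 - a 2 + a 3 = 0 := by
    simpa [Fin.sum_univ_four, cubeVertex, x₁, x₂, x₃, x₄, ← sub_eq_add_neg]
      using congrFun sum_eq_zero 0
  have h₁ : a 0 + a 1 - a 2 - a 3 = 0 := by
    simpa [Fin.sum_univ_four, cubeVertex, x₁, x₂, x₃, x₄, ← sub_eq_add_neg]
      using congrFun sum_eq_zero 1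
  have h₂ : a 0 + a 1 + a 2 + a 3 = 0 := by
    simpa [Fin.sum_univ_four, cubeVertex, x₁, x₂, x₃, x₄] using congrFun sum_eq_zero 2
  refine Submodule.mem_span_singleton.2 ⟨a 0, ?_⟩
  ext i
  fin_cases i <;> simp [cubeRelation] <;> linarith

lemma insert_vertices_eq_range_union_neg :
    ({x₁, -x₁, x₂, -x₂, x₃, -x₃, x₄, -x₄} : Set Linf3) = range cubeVertex ∪ -range cubeVertex := by
  ext v
  simp only [cubeVertex, mem_insert_iff, mem_singleton_iff, mem_union, Set.mem_neg, mem_range,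
    Fin.exists_fin_succ, IsEmpty.exists_iff, Matrix.cons_val_zero, Matrix.cons_val_succ, or_false]
  grind

end Cube

section AttainingPoints

variable {X Y : Type*} [NormedAddCommGroup X] [NormedSpace ℝ X]
  [NormedAddCommGroup Y] [NormedSpace ℝ Y]

/-- `M_T ∩ Ext(B_X)`: the extreme points of the unit ball at which `T` attains its norm. -/
def attainingExtremePoints (T : X →L[ℝ] Y) : Set X :=
  {x ∈ sphere (0 : X) 1 | ‖T x‖ = ‖T‖} ∩ extremePoints ℝ (closedBall (0 : X) 1)

/-- The set `S_k` of the points of `M_T ∩ Ext(B_X)` whose image under `T` is `k`-smooth. -/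
def smoothAttainingPoints (T : X →L[ℝ] Y) (k : ℕ) : Set X :=
  {x ∈ attainingExtremePoints T | finrank ℝ (suppSpan (T x)) = k}

lemma pm_suppFunctionals_of_common_functional (hY : ExtremeFaceSpanProperty Y) {T : X →L[ℝ] Y}
    (hT : ‖T‖ = 1) {v : Y →L[ℝ] ℝ} (hv : v ≠ 0)
    (hv_mem : ∀ x ∈ attainingExtremePoints T, v ∈ suppSpan (T x)) :
    (∀ x ∈ smoothAttainingPoints T 1, ∀ z ∈ smoothAttainingPoints T 1,
      pm (suppFunctionals (T x)) = pm (suppFunctionals (T z))) ∧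
    (∀ x ∈ smoothAttainingPoints T 1, ∀ z ∈ attainingExtremePoints T,
      pm (suppFunctionals (T x)) ⊆ pm (extremePoints ℝ (suppFunctionals (T z)))) := by
  have subset_extreme : ∀ x ∈ smoothAttainingPoints T 1, ∀ z ∈ attainingExtremePoints T,
      pm (suppFunctionals (T x)) ⊆ pm (extremePoints ℝ (suppFunctionals (T z))) :=
    fun x hx z hz ↦ pm_suppFunctionals_subset_pm_extremePoints hY (hx.1.1.2.trans hT)
      (hz.1.2.trans hT) hx.2 hv (hv_mem x hx.1) (hv_mem z hz)
  have subset : ∀ x ∈ smoothAttainingPoints T 1, ∀ z ∈ smoothAttainingPoints T 1,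
      pm (suppFunctionals (T x)) ⊆ pm (suppFunctionals (T z)) :=
    fun x hx z hz ↦ (subset_extreme x hx z hz.1).trans (pm_mono extremePoints_subset)
  exact ⟨fun x hx z hz ↦ (subset x hx z hz).antisymm (subset z hz x hx), subset_extreme⟩

end AttainingPoints

section Counting

variable {ι : Type*} [Fintype ι] {d : ι → ℕ} {p q : ℕ}

lemma disjoint_filter_eq (hpq : p ≠ q) :
    Disjoint ({i | d i = p} : Finset ι) ({i | d i = q} : Finset ι) :=
  Finset.disjoint_filter.2 fun _ _ hp hq ↦ hpq (hp.symm.trans hq)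

lemma disjUnion_filter_eq_univ (hpq : p ≠ q)
    (h : Finset.card {i | d i = p} + Finset.card {i | d i = q} = Fintype.card ι) :
    ({i | d i = p} : Finset ι).disjUnion {i | d i = q} (disjoint_filter_eq hpq) =
      Finset.univ := by
  rw [← Finset.card_eq_iff_eq_univ, Finset.card_disjUnion, h]

lemma eq_or_eq_of_card_filter_add_card_filter (hpq : p ≠ q)
    (h : Finset.card {i | d i = p} + Finset.card {i | d i = q} = Fintype.card ι) (i : ι) :
    d i = p ∨ d i = q := by
  have mem_univ : i ∈ Finset.univ := Finset.mem_univ i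
  rwa [← disjUnion_filter_eq_univ hpq h, Finset.mem_disjUnion, Finset.mem_filter_univ,
    Finset.mem_filter_univ] at mem_univ

lemma sum_eq_of_card_filter_add_card_filter (hpq : p ≠ q)
    (h : Finset.card {i | d i = p} + Finset.card {i | d i = q} = Fintype.card ι) :
    ∑ i, d i = Finset.card {i | d i = p} * p + Finset.card {i | d i = q} * q := by
  have sum_filter (k : ℕ) : ∑ i with d i = k, d i = Finset.card {i | d i = k} * k :=
    Finset.sum_const_nat fun i hi ↦ (Finset.mem_filter_univ i).1 hi
  rw [← sum_filter p, ← sum_filter q, ← Finset.sum_disjUnion (disjoint_filter_eq hpq),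
    disjUnion_filter_eq_univ hpq h]

end Counting

section CubeOperators

variable {Y : Type*} [NormedAddCommGroup Y] [NormedSpace ℝ Y] {T : Linf3 →L[ℝ] Y}

lemma mem_suppSpan_of_mem_iInf_cubeVertex {v : Y →L[ℝ] ℝ}
    (hv : v ∈ ⨅ i, suppSpan (T (cubeVertex i))) :
    ∀ x ∈ range cubeVertex ∪ -range cubeVertex, v ∈ suppSpan (T x) := by
  rw [Submodule.mem_iInf] at hv
  rintro x (⟨i, rfl⟩ | ⟨i, hi⟩)
  · exact hv i
  · rw [← neg_eq_iff_eq_neg.2 hi, map_neg, suppSpan_neg]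
    exact hv i

lemma smoothAttainingPoints_eq_image_union_neg
    (hMT : attainingExtremePoints T = range cubeVertex ∪ -range cubeVertex) (k : ℕ) :
    smoothAttainingPoints T k =
      cubeVertex '' {i | finrank ℝ (suppSpan (T (cubeVertex i))) = k} ∪
        -(cubeVertex '' {i | finrank ℝ (suppSpan (T (cubeVertex i))) = k}) := by
  ext x
  constructor
  · rintro ⟨hx, hk⟩
    rw [hMT] at hx
    rcases hx with ⟨i, rfl⟩ | ⟨i, hi⟩
    · exact Or.inl ⟨i, hk, rfl⟩
    · refine Or.inr ⟨i, ?_, hi⟩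
      rwa [← neg_eq_iff_eq_neg.2 hi, map_neg, suppSpan_neg] at hk
  · rintro (⟨i, hk, rfl⟩ | ⟨i, hk, hi⟩)
    · exact ⟨hMT ▸ Or.inl ⟨i, rfl⟩, hk⟩
    · refine ⟨hMT ▸ Or.inr ⟨i, hi⟩, ?_⟩
      rwa [← neg_eq_iff_eq_neg.2 hi, map_neg, suppSpan_neg]

lemma encard_smoothAttainingPoints
    (hMT : attainingExtremePoints T = range cubeVertex ∪ -range cubeVertex) (k : ℕ) :
    (smoothAttainingPoints T k).encard =
      2 * Finset.card {i | finrank ℝ (suppSpan (T (cubeVertex i))) = k} := by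
  rw [smoothAttainingPoints_eq_image_union_neg hMT, encard_union_eq, encard_neg,
    cubeVertex_injective.encard_image, ← two_mul, ← encard_coe_eq_coe_finsetCard]
  · simp
  · exact disjoint_range_cubeVertex_neg.mono (image_subset_range _ _)
      (neg_subset_neg.2 (image_subset_range _ _))

lemma finrank_suppSpan_cubeVertex
    (hMT : attainingExtremePoints T = range cubeVertex ∪ -range cubeVertex)
    (h1 : (smoothAttainingPoints T 1).encard = 6) (h2 : (smoothAttainingPoints T 2).encard = 2) :
    (∀ i, 0 < finrank ℝ (suppSpan (T (cubeVertex i)))) ∧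
      ∑ i, finrank ℝ (suppSpan (T (cubeVertex i))) = 5 := by
  rw [encard_smoothAttainingPoints hMT] at h1 h2
  norm_cast at h1 h2
  have card_one : Finset.card {i | finrank ℝ (suppSpan (T (cubeVertex i))) = 1} = 3 := by lia
  have card_two : Finset.card {i | finrank ℝ (suppSpan (T (cubeVertex i))) = 2} = 1 := by lia
  have card_add : Finset.card {i | finrank ℝ (suppSpan (T (cubeVertex i))) = 1} +
      Finset.card {i | finrank ℝ (suppSpan (T (cubeVertex i))) = 2} = Fintype.card (Fin 4) := by
    rw [card_one, card_two, Fintype.card_fin]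
  refine ⟨fun i ↦ ?_, ?_⟩
  · rcases eq_or_eq_of_card_filter_add_card_filter (by decide) card_add i with h | h <;> lia
  · rw [sum_eq_of_card_filter_add_card_filter (by decide) card_add, card_one, card_two]

end CubeOperators

theorem stmt_12_general {Y : Type*} [NormedAddCommGroup Y] [NormedSpace ℝ Y]
    (hY : ExtremeFaceSpanProperty Y) (T : Linf3 →L[ℝ] Y) (hT : ‖T‖ = 1)
    (hMT : attainingExtremePoints T = {x₁, -x₁, x₂, -x₂, x₃, -x₃, x₄, -x₄})
    (h1 : (smoothAttainingPoints T 1).encard = 6) (h2 : (smoothAttainingPoints T 2).encard = 2)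
    (hJ : ¬ ((∀ xi ∈ smoothAttainingPoints T 1, ∀ xj ∈ smoothAttainingPoints T 1,
        pm (suppFunctionals (T xi)) = pm (suppFunctionals (T xj))) ∧
      (∀ xi ∈ smoothAttainingPoints T 1, ∀ xk ∈ smoothAttainingPoints T 2,
        pm (suppFunctionals (T xi)) ⊆ pm (extremePoints ℝ (suppFunctionals (T xk)))))) :
    finrank ℝ (suppSpan T) = 5 := by
  rw [insert_vertices_eq_range_union_neg] at hMT
  have iInf_eq_bot : ⨅ i, suppSpan (T (cubeVertex i)) = ⊥ := by
    by_contra h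
    obtain ⟨v, hv, v_ne_zero⟩ := Submodule.exists_mem_ne_zero_of_ne_bot h
    have hv_mem : ∀ x ∈ attainingExtremePoints T, v ∈ suppSpan (T x) :=
      hMT ▸ mem_suppSpan_of_mem_iInf_cubeVertex hv
    obtain ⟨h_eq, h_subset⟩ := pm_suppFunctionals_of_common_functional hY hT v_ne_zero hv_mem
    exact hJ ⟨h_eq, fun x hx z hz ↦ h_subset x hx z hz.1⟩
  obtain ⟨finrank_pos, sum_eq⟩ := finrank_suppSpan_cubeVertex hMT h1 h2
  have (i : Fin 4) : FiniteDimensional ℝ (suppSpan (T (cubeVertex i))) :=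
    FiniteDimensional.of_finrank_pos (finrank_pos i)
  rw [finrank_suppSpan_eq_sum_of_iInf_eq_bot isNormingFamily_cubeVertex cubeRelation_ne_zero
    ker_linearCombination_cubeVertex_le hT.le iInf_eq_bot, sum_eq]

theorem stmt_12
    (T : Linf3 →L[ℝ] L13) (hT : ‖T‖ = 1)
    (hMT : MTExt T = {x₁, -x₁, x₂, -x₂, x₃, -x₃, x₄, -x₄})
    (h1 : (Sk T 1).encard = 6) (h2 : (Sk T 2).encard = 2)
    (h3 : (Sk T 3).encard = 0)
    (hJ : ¬ ((∀ xi ∈ Sk T 1, ∀ xj ∈ Sk T 1,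
        pm (suppFunctionals (T xi)) = pm (suppFunctionals (T xj))) ∧
      (∀ xi ∈ Sk T 1, ∀ xk ∈ Sk T 2,
        pm (suppFunctionals (T xi)) ⊆ pm (extremePoints ℝ (suppFunctionals (T xk))))))
    :
    finrank ℝ (Submodule.span ℝ (suppFunctionals T)) = 5 :=
  stmt_12_general (extremeFaceSpanProperty_piLp_one (Fin 3)) T hT hMT h1 h2 hJ
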